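/- Let R be a commutative noetherian ring, let J be a Gorenstein injective R-module, and let p be a prime ideal of R. Then Tor_i^{R_p}(κ(p), J_p) = 0 for every i < depth(R_p), where κ(p) is the residue field of the local ring R_p; equivalently, depth(R_p) ≤ width_{R_p}(J_p). -/

import Mathlib

/-!
Let `R` be a commutative noetherian ring, `J` a Gorenstein injective `R`-module and `p`
a prime ideal. Then `Tor_i^{R_p}(κ(p), J_p) = 0` for every `i < depth R_p`;
equivalently, `depth R_p ≤ width_{R_p} J_p`.
-/

universe u

open CategoryTheory

/-- A witness that `J` is a Gorenstein injective `R`-module: an exact complex `I` of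
injective `R`-modules (with differentials `d i : I (i+1) →ₗ[R] I i`) such that
`Hom_R(E, I)` is exact for every injective `R`-module `E`, together with an
isomorphism `J ≅ ker (I 0 → I (-1))`. -/
structure GorensteinInjectiveWitness (R : Type u) [CommRing R]
    (J : Type u) [AddCommGroup J] [Module R J] : Type (u + 1) where
  I : ℤ → Type u
  [acg : ∀ i, AddCommGroup (I i)]
  [mod : ∀ i, Module R (I i)]
  inj : ∀ i, Module.Injective R (I i)
  d : ∀ i : ℤ, I (i + 1) →ₗ[R] I i
  d_comp_d : ∀ i : ℤ, (d i).comp (d (i + 1)) = 0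
  exact : ∀ i : ℤ, LinearMap.ker (d i) = LinearMap.range (d (i + 1))
  hom_exact : ∀ (E : Type u) [AddCommGroup E] [Module R E], Module.Injective R E →
    ∀ (i : ℤ) (f : E →ₗ[R] I (i + 1)), (d i).comp f = 0 →
      ∃ g : E →ₗ[R] I (i + 1 + 1), (d (i + 1)).comp g = f
  ker_iso : Nonempty (J ≃ₗ[R] LinearMap.ker (d (-1)))

/-- `J` is a Gorenstein injective `R`-module. -/
def IsGorensteinInjective (R : Type u) [CommRing R]
    (J : Type u) [AddCommGroup J] [Module R J] : Prop :=
  Nonempty (GorensteinInjectiveWitness R J)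

/-- The depth of a noetherian local ring `A`: the supremum (in `ℕ∞`) of lengths of
`A`-regular sequences contained in the maximal ideal. -/
noncomputable def ringDepth (A : Type u) [CommRing A] [IsLocalRing A] : ℕ∞ :=
  sSup {c : ℕ∞ | ∃ rs : List A, c = rs.length ∧
    (∀ r ∈ rs, r ∈ IsLocalRing.maximalIdeal A) ∧ RingTheory.Sequence.IsRegular A rs}

/-- The width of a module `N` over a local ring `A`:
`inf { i | Tor_i^A(k, N) ≠ 0 } ∈ ℕ∞`, where `k` is the residue field of `A`. -/
noncomputable def modWidth (A : Type u) [CommRing A] [IsLocalRing A]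
    (N : Type u) [AddCommGroup N] [Module A N] : ℕ∞ :=
  sInf {c : ℕ∞ | ∃ i : ℕ, c = i ∧
    ¬ Subsingleton (((Tor (ModuleCat.{u} A) i).obj
      (ModuleCat.of A (IsLocalRing.ResidueField A))).obj (ModuleCat.of A N))}

/-!
By Hom–tensor adjunction `Tor_i(T, N)` vanishes as soon as `Ext^i(N, T⋆)` does, where `T⋆` is the
character module of `T`. Let `rs` be a regular sequence in the local ring `A`, lying in the maximal
ideal, and let `V` be the character module of the residue field, which `rs` annihilates. For `E`
injective and `r` regular on `Q`, the sequence `0 → Hom(Q/rQ, E) → Hom(Q, E) → Hom(Q, E) → 0` with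
second map `r` is exact, and `r` acts as zero on `Ext(-, V)`; consuming `rs` one element at a time,
starting from `Q = A`, gives `Ext^i(E, V) = 0` for `i < rs.length`. Dimension shifting extends this
to every module with a left resolution by injectives of length `rs.length`. A Gorenstein injective
module has such resolutions of every length, and over a noetherian ring they localize.
-/

open CategoryTheory.Abelian

section TorExtDuality

open TensorProduct

theorem exact_of_exact_dual {A : Type*} [CommRing A] {M N P : Type*}
    [AddCommGroup M] [Module A M] [AddCommGroup N] [Module A N] [AddCommGroup P] [Module A P]
    {f : M →ₗ[A] N} {g : N →ₗ[A] P}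
    (h : Function.Exact (CharacterModule.dual g) (CharacterModule.dual f)) :
    Function.Exact f g := by
  refine LinearMap.exact_of_comp_of_mem_range ?_ fun z hz ↦ ?_
  · ext x
    exact CharacterModule.eq_zero_of_character_apply fun c ↦
      DFunLike.congr_fun (h.apply_apply_eq_zero c) x
  · rw [← Submodule.Quotient.mk_eq_zero]
    refine CharacterModule.eq_zero_of_character_apply fun c ↦ ?_
    have hc : CharacterModule.dual f (CharacterModule.dual (LinearMap.range f).mkQ c) = 0 := by
      rw [← LinearMap.comp_apply, ← CharacterModule.dual_comp, LinearMap.range_mkQ_comp,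
        CharacterModule.dual_zero, LinearMap.zero_apply]
    obtain ⟨c', hc'⟩ := (h _).1 hc
    calc c (Submodule.Quotient.mk z) = c' (g z) := (DFunLike.congr_fun hc' z).symm
      _ = 0 := by rw [hz, map_zero]

theorem lTensor_exact_of_lcomp_characterModule_exact {A : Type*} [CommRing A]
    {M N P : Type*} (T : Type*) [AddCommGroup M] [Module A M] [AddCommGroup N] [Module A N]
    [AddCommGroup P] [Module A P] [AddCommGroup T] [Module A T] {f : M →ₗ[A] N} {g : N →ₗ[A] P}
    (h : Function.Exact (g.lcomp A (CharacterModule T)) (f.lcomp A (CharacterModule T))) :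
    Function.Exact (f.lTensor T) (g.lTensor T) := by
  have rTensor_exact : Function.Exact (f.rTensor T) (g.rTensor T) :=
    exact_of_exact_dual <| Function.Exact.of_ladder_linearEquiv_of_exact
      (e₁ := CharacterModule.homEquiv) (e₂ := CharacterModule.homEquiv)
      (e₃ := CharacterModule.homEquiv)
      (by rw [← CharacterModule.dual_rTensor_conj_homEquiv]; ext; simp)
      (by rw [← CharacterModule.dual_rTensor_conj_homEquiv]; ext; simp) h
  exact Function.Exact.of_ladder_linearEquiv_of_exact (e₁ := TensorProduct.comm A M T)
    (e₂ := TensorProduct.comm A N T) (e₃ := TensorProduct.comm A P T)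
    (LinearMap.lTensor_comp_comm _) (LinearMap.lTensor_comp_comm _) rTensor_exact

theorem exists_d_comp_eq_of_subsingleton_ext {C : Type*} [Category* C] [Abelian C] [HasExt C]
    {X Y : C} (P : ProjectiveResolution X) (i : ℕ) [hXY : Subsingleton (Ext X Y i)]
    (f : P.complex.X i ⟶ Y) (hf : P.complex.d (i + 1) i ≫ f = 0) :
    ∃ g : P.complex.X ((ComplexShape.down ℕ).next i) ⟶ Y,
      P.complex.d i ((ComplexShape.down ℕ).next i) ≫ g = f := by
  cases i with
  | zero =>
    have desc_eq_zero : P.exact₀.desc f hf = 0 :=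
      Ext.addEquiv₀.symm.injective (hXY.elim _ _)
    refine ⟨0, ?_⟩
    rw [← P.exact₀.g_desc f hf, desc_eq_zero, Limits.comp_zero, Limits.comp_zero]
  | succ j =>
    rw [ChainComplex.next_nat_succ]
    exact (P.extMk_eq_zero_iff f (j + 2) rfl hf j rfl).1 (Subsingleton.elim _ _)

theorem subsingleton_tor_of_subsingleton_ext_characterModule {A : Type u} [CommRing A]
    (T N : ModuleCat.{u} A) (i : ℕ)
    [Subsingleton (Ext N (ModuleCat.of A (CharacterModule T)) i)] :
    Subsingleton (((Tor (ModuleCat.{u} A) i).obj T).obj N) := by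
  let P := projectiveResolution N
  let F := (MonoidalCategory.tensoringLeft (ModuleCat.{u} A)).obj T
  let K := (F.mapHomologicalComplex (ComplexShape.down ℕ)).obj P.complex
  have hom_exact : Function.Exact
      ((P.complex.d i ((ComplexShape.down ℕ).next i)).hom.lcomp A (CharacterModule T))
      ((P.complex.d (i + 1) i).hom.lcomp A (CharacterModule T)) := by
    refine LinearMap.exact_of_comp_of_mem_range ?_ fun f hf ↦ ?_
    · ext f : 1
      change f ∘ₗ (P.complex.d i _).hom ∘ₗ (P.complex.d (i + 1) i).hom = 0
      rw [← ModuleCat.hom_comp, P.complex.d_comp_d, ModuleCat.hom_zero, LinearMap.comp_zero]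
    · obtain ⟨g, hg⟩ := exists_d_comp_eq_of_subsingleton_ext P i
        (Y := ModuleCat.of A (CharacterModule T)) (ModuleCat.ofHom f) (ModuleCat.hom_ext hf)
      exact ⟨g.hom, congrArg ModuleCat.Hom.hom hg⟩
  have tensor_exact : K.ExactAt i := by
    rw [K.exactAt_iff' (i + 1) i _ (ChainComplex.prev ℕ i) rfl,
      ShortComplex.ShortExact.moduleCat_exact_iff_function_exact]
    exact lTensor_exact_of_lcomp_characterModule_exact T hom_exact
  exact ModuleCat.subsingleton_of_isZero
    (((K.exactAt_iff_isZero_homology i).1 tensor_exact).of_iso (P.isoLeftDerivedObj F i))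

end TorExtDuality

section ExtVanishing

theorem subsingleton_ext_X₃ {C : Type*} [Category* C] [Abelian C] [HasExt C]
    {S : ShortComplex C} (hS : S.ShortExact) {V : C} {i : ℕ}
    (h₁ : ∀ j, j + 1 = i → Subsingleton (Ext S.X₁ V j))
    (hg : ∀ x : Ext S.X₃ V i, (Ext.mk₀ S.g).comp x (zero_add i) = 0) :
    Subsingleton (Ext S.X₃ V i) := by
  refine subsingleton_of_forall_eq 0 fun x ↦ ?_
  cases i with
  | zero =>
    have := hS.epi_g
    obtain ⟨f, rfl⟩ := Ext.addEquiv₀.symm.surjective x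
    have hf : S.g ≫ f = 0 := by
      refine Ext.addEquiv₀.symm.injective ?_
      simpa using hg (Ext.mk₀ f)
    rw [Limits.zero_of_epi_comp S.g hf, map_zero]
  | succ j =>
    have := h₁ j rfl
    obtain ⟨y, rfl⟩ := Ext.contravariant_sequence_exact₃ hS V x (hg x) (add_comm 1 j)
    rw [Subsingleton.elim y 0, Ext.comp_zero]

variable {A : Type u} [CommRing A]

theorem smul_ext_eq_zero {M V : ModuleCat.{u} A} {r : A} (hr : r ∈ Module.annihilator A V)
    {i : ℕ} (x : Ext M V i) : r • x = 0 := by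
  have : r • 𝟙 V = 0 := by
    ext v
    exact Module.mem_annihilator.1 hr v
  rw [Ext.smul_eq_comp_mk₀, this, Ext.mk₀_zero, Ext.comp_zero]

open Pointwise in
theorem shortExact_lcomp_mkQ_lsmul {Q E : Type u} [AddCommGroup Q] [Module A Q] [AddCommGroup E]
    [Module A E] [Module.Injective A E] {r : A} (hr : IsSMulRegular Q r) :
    ∃ w, (ModuleCat.shortComplexOfCompEqZero ((r • (⊤ : Submodule A Q)).mkQ.lcomp A E)
      (LinearMap.lsmul A (Q →ₗ[A] E) r) w).ShortExact := by
  have lcomp_lsmul : (LinearMap.lsmul A Q r).lcomp A E = LinearMap.lsmul A (Q →ₗ[A] E) r := by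
    ext φ q
    exact map_smul φ r q
  have exact : Function.Exact ((r • (⊤ : Submodule A Q)).mkQ.lcomp A E)
      (LinearMap.lsmul A (Q →ₗ[A] E) r) :=
    lcomp_lsmul ▸ LinearMap.exact_lcomp_of_exact_of_surjective E
      (LinearMap.exact_lsmul_mkQ_smul_top Q r) (Submodule.mkQ_surjective _)
  refine ⟨exact.linearMap_comp_eq_zero, ModuleCat.shortComplex_shortExact _ exact
    (LinearMap.lcomp_injective_of_surjective _ (Submodule.mkQ_surjective _)) ?_⟩
  change Function.Surjective (LinearMap.lsmul A (Q →ₗ[A] E) r)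
  rw [← lcomp_lsmul]
  intro φ
  obtain ⟨ψ, hψ⟩ := Module.Injective.out (LinearMap.lsmul A Q r) hr φ
  exact ⟨ψ, LinearMap.ext hψ⟩

theorem subsingleton_ext_linearMap_of_isWeaklyRegular (E : Type u) [AddCommGroup E] [Module A E]
    [Module.Injective A E] {V : ModuleCat.{u} A} (rs : List A)
    (hV : ∀ r ∈ rs, r ∈ Module.annihilator A V) (Q : Type u) [AddCommGroup Q] [Module A Q]
    (hrs : RingTheory.Sequence.IsWeaklyRegular Q rs) (i : ℕ) (hi : i < rs.length) :
    Subsingleton (Ext (ModuleCat.of A (Q →ₗ[A] E)) V i) := by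
  induction rs generalizing Q i with
  | nil => exact absurd hi i.not_lt_zero
  | cons r rs ih =>
    obtain ⟨hr, hrs⟩ := (RingTheory.Sequence.isWeaklyRegular_cons_iff Q r rs).1 hrs
    obtain ⟨hrV, hV⟩ := List.forall_mem_cons.1 hV
    obtain ⟨_, hS⟩ := shortExact_lcomp_mkQ_lsmul (E := E) hr
    refine subsingleton_ext_X₃ hS (fun j hj ↦ ?_) fun x ↦ ?_
    · exact ih hV (QuotSMulTop r Q) hrs j (by simp only [List.length_cons] at hi; omega)
    · change (Ext.mk₀ (r • 𝟙 (ModuleCat.of A (Q →ₗ[A] E)))).comp x (zero_add i) = 0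
      rw [Ext.mk₀_smul, Ext.smul_comp, Ext.mk₀_id_comp, smul_ext_eq_zero hrV]

theorem subsingleton_ext_of_injective_of_isWeaklyRegular {E V : ModuleCat.{u} A} [Injective E]
    {rs : List A} (hrs : RingTheory.Sequence.IsWeaklyRegular A rs)
    (hV : ∀ r ∈ rs, r ∈ Module.annihilator A V) {i : ℕ} (hi : i < rs.length) :
    Subsingleton (Ext E V i) := by
  have : Module.Injective A E := Module.injective_module_of_injective_object A E
  let e : E ≅ ModuleCat.of A (A →ₗ[A] E) := (LinearMap.ringLmapEquivSelf A A E).symm.toModuleIso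
  let ext_equiv := (((extFunctor i).mapIso e.op).app V).addCommGroupIsoToAddEquiv
  exact ext_equiv.subsingleton_congr.1
    (subsingleton_ext_linearMap_of_isWeaklyRegular E rs hV A hrs i hi)

end ExtVanishing

/-- `IsInjectiveCosyzygy n X` says that `X` is an `n`-th cosyzygy: there is an exact sequence
`0 → K → I_{n-1} → ⋯ → I_0 → X → 0` with all `I_j` injective and `K` arbitrary. The sequence is cut
into short exact sequences, peeled off from the right, so that dimension shifting is an induction
on the predicate. -/
inductive IsInjectiveCosyzygy {C : Type*} [Category* C] [Limits.HasZeroMorphisms C] : ℕ → C → Prop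
  | zero (X : C) : IsInjectiveCosyzygy 0 X
  | succ {S : ShortComplex C} (hS : S.ShortExact) [Injective S.X₂] {n : ℕ}
      (h : IsInjectiveCosyzygy n S.X₁) : IsInjectiveCosyzygy (n + 1) S.X₃

namespace IsInjectiveCosyzygy

theorem of_iso {C : Type*} [Category* C] [Limits.HasZeroMorphisms C] {n : ℕ} {X Y : C} (e : X ≅ Y)
    (h : IsInjectiveCosyzygy n X) : IsInjectiveCosyzygy n Y := by
  cases h with
  | zero => exact .zero Y
  | @succ S hS _ n h =>
    let S' : ShortComplex C := .mk S.f (S.g ≫ e.hom) (by simp)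
    have : Injective S'.X₂ := inferInstanceAs (Injective S.X₂)
    exact .succ (S := S') (ShortComplex.shortExact_of_iso
      (ShortComplex.isoMk (S₁ := S) (S₂ := S') (Iso.refl _) (Iso.refl _) e) hS) h

theorem map {C D : Type*} [Category* C] [Category* D] [Abelian C] [Abelian D]
    (F : C ⥤ D) [F.PreservesZeroMorphisms] [Limits.PreservesFiniteLimits F]
    [Limits.PreservesFiniteColimits F] [F.PreservesInjectiveObjects] {n : ℕ} {X : C}
    (h : IsInjectiveCosyzygy n X) : IsInjectiveCosyzygy n (F.obj X) := by
  induction h with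
  | zero X => exact .zero _
  | @succ S hS _ n _ ih =>
    have : Injective (S.map F).X₂ := inferInstanceAs (Injective (F.obj S.X₂))
    exact .succ (hS.map_of_exact F) ih

theorem subsingleton_ext {C : Type*} [Category* C] [Abelian C] [HasExt C] {V X : C} {n : ℕ}
    (h : IsInjectiveCosyzygy n X)
    (hV : ∀ (E : C) [Injective E], ∀ i < n, Subsingleton (Ext E V i)) {i : ℕ} (hi : i < n) :
    Subsingleton (Ext X V i) := by
  induction h generalizing i with
  | zero => exact absurd hi i.not_lt_zero
  | @succ S hS _ n _ ih =>
    refine subsingleton_ext_X₃ hS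
      (fun j _ ↦ ih (fun E _ k hk ↦ hV E k (by omega)) (by omega)) fun x ↦ ?_
    have := hV S.X₂ i hi
    exact Subsingleton.elim _ _

theorem localizedModule {R : Type u} [CommRing R] [IsNoetherianRing R] (S : Submonoid R)
    {M : Type u} [AddCommGroup M] [Module R M] {n : ℕ}
    (h : IsInjectiveCosyzygy n (ModuleCat.of R M)) :
    IsInjectiveCosyzygy n (ModuleCat.of (Localization S) (LocalizedModule S M)) :=
  (h.map (ModuleCat.localizedModuleFunctor.{u} S)).of_iso
    (Shrink.linearEquiv (Localization S) (LocalizedModule S M)).toModuleIso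

theorem subsingleton_tor {A : Type u} [CommRing A] {T N : ModuleCat.{u} A} {rs : List A}
    (h : IsInjectiveCosyzygy rs.length N) (hrs : RingTheory.Sequence.IsWeaklyRegular A rs)
    (hT : ∀ r ∈ rs, r ∈ Module.annihilator A T) {i : ℕ} (hi : i < rs.length) :
    Subsingleton (((Tor (ModuleCat.{u} A) i).obj T).obj N) := by
  have dual_ann : ∀ r ∈ rs, r ∈ Module.annihilator A (CharacterModule T) := fun r hr ↦
    Module.mem_annihilator.2 fun c ↦ DFunLike.ext _ _ fun t ↦ by
      rw [CharacterModule.smul_apply, Module.mem_annihilator.1 (hT r hr), map_zero]; rfl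
  have : Subsingleton (Ext N (ModuleCat.of A (CharacterModule T)) i) :=
    h.subsingleton_ext
      (fun _ _ _ hj ↦ subsingleton_ext_of_injective_of_isWeaklyRegular hrs dual_ann hj) hi
  exact subsingleton_tor_of_subsingleton_ext_characterModule T N i

end IsInjectiveCosyzygy

theorem GorensteinInjectiveWitness.isInjectiveCosyzygy_ker {R : Type u} [CommRing R] {J : Type u}
    [AddCommGroup J] [Module R J] (W : GorensteinInjectiveWitness R J) (n : ℕ) (i : ℤ) :
    letI := W.acg
    letI := W.mod
    IsInjectiveCosyzygy n (ModuleCat.of R (LinearMap.ker (W.d i))) := by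
  let := W.acg
  let := W.mod
  induction n generalizing i with
  | zero => exact .zero _
  | succ n ih =>
    have := W.inj (i + 1 + 1)
    let π : W.I (i + 1 + 1) →ₗ[R] LinearMap.ker (W.d i) :=
      (W.d (i + 1)).codRestrict _ fun x ↦ LinearMap.congr_fun (W.d_comp_d i) x
    have π_surjective : Function.Surjective π := by
      rintro ⟨x, hx⟩
      obtain ⟨y, rfl⟩ := (W.exact i).le hx
      exact ⟨y, rfl⟩
    have : Injective π.shortComplexKer.X₂ := Module.injective_object_of_injective_module R _
    exact .succ (LinearMap.shortExact_shortComplexKer π_surjective)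
      ((ih (i + 1)).of_iso (LinearEquiv.ofEq _ _ (LinearMap.ker_codRestrict ..).symm).toModuleIso)

theorem IsGorensteinInjective.isInjectiveCosyzygy {R : Type u} [CommRing R] {J : Type u}
    [AddCommGroup J] [Module R J] (hJ : IsGorensteinInjective R J) (n : ℕ) :
    IsInjectiveCosyzygy n (ModuleCat.of R J) := by
  obtain ⟨W⟩ := hJ
  let := W.acg
  let := W.mod
  obtain ⟨e⟩ := W.ker_iso
  exact (W.isInjectiveCosyzygy_ker n (-1)).of_iso e.symm.toModuleIso

theorem lt_ringDepth_iff {A : Type u} [CommRing A] [IsLocalRing A] {i : ℕ} :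
    (i : ℕ∞) < ringDepth A ↔ ∃ rs : List A, i < rs.length ∧
      (∀ r ∈ rs, r ∈ IsLocalRing.maximalIdeal A) ∧ RingTheory.Sequence.IsRegular A rs := by
  simp only [ringDepth, lt_sSup_iff, Set.mem_ofPred_eq]
  constructor
  · rintro ⟨_, ⟨rs, rfl, hrs⟩, hi⟩
    exact ⟨rs, Nat.cast_lt.1 hi, hrs⟩
  · rintro ⟨rs, hi, hrs⟩
    exact ⟨_, ⟨rs, rfl, hrs⟩, Nat.cast_lt.2 hi⟩

theorem le_modWidth_of_forall_lt {A : Type u} [CommRing A] [IsLocalRing A] {N : Type u}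
    [AddCommGroup N] [Module A N] {c : ℕ∞}
    (h : ∀ i : ℕ, (i : ℕ∞) < c → Subsingleton (((Tor (ModuleCat.{u} A) i).obj
      (ModuleCat.of A (IsLocalRing.ResidueField A))).obj (ModuleCat.of A N))) :
    c ≤ modWidth A N := by
  refine le_sInf ?_
  rintro _ ⟨i, rfl, hi⟩
  exact not_lt.1 fun hlt ↦ hi (h i hlt)

theorem subsingleton_tor_residueField_of_lt_ringDepth {A : Type u} [CommRing A] [IsLocalRing A]
    {N : ModuleCat.{u} A} (hN : ∀ n, IsInjectiveCosyzygy n N) {i : ℕ}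
    (hi : (i : ℕ∞) < ringDepth A) :
    Subsingleton (((Tor (ModuleCat.{u} A) i).obj
      (ModuleCat.of A (IsLocalRing.ResidueField A))).obj N) := by
  obtain ⟨rs, hlen, hmem, hreg⟩ := lt_ringDepth_iff.1 hi
  refine (hN rs.length).subsingleton_tor hreg.toIsWeaklyRegular (fun r hr ↦ ?_) hlen
  change r ∈ Module.annihilator A (A ⧸ IsLocalRing.maximalIdeal A)
  rw [Ideal.annihilator_quotient]
  exact hmem r hr

theorem tor_vanishing_of_isGorensteinInjective_localized_general
    (R : Type u) [CommRing R] [IsNoetherianRing R]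
    (J : Type u) [AddCommGroup J] [Module R J]
    (hJ : ∀ n, IsInjectiveCosyzygy n (ModuleCat.of R J)) (p : Ideal R) [p.IsPrime] :
    (∀ i : ℕ, (i : ℕ∞) < ringDepth (Localization.AtPrime p) →
        Subsingleton (((Tor (ModuleCat.{u} (Localization.AtPrime p)) i).obj
          (ModuleCat.of (Localization.AtPrime p)
            (IsLocalRing.ResidueField (Localization.AtPrime p)))).obj
          (ModuleCat.of (Localization.AtPrime p) (LocalizedModule p.primeCompl J)))) ∧
      ringDepth (Localization.AtPrime p) ≤
        modWidth (Localization.AtPrime p) (LocalizedModule p.primeCompl J) := by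
  have tor_vanishing := fun i : ℕ ↦ subsingleton_tor_residueField_of_lt_ringDepth (i := i)
    fun n ↦ (hJ n).localizedModule p.primeCompl
  exact ⟨tor_vanishing, le_modWidth_of_forall_lt tor_vanishing⟩

theorem tor_vanishing_of_isGorensteinInjective_localized
    (R : Type u) [CommRing R] [IsNoetherianRing R]
    (J : Type u) [AddCommGroup J] [Module R J] (hJ : IsGorensteinInjective R J)
    (p : Ideal R) [p.IsPrime] :
    (∀ i : ℕ, (i : ℕ∞) < ringDepth (Localization.AtPrime p) →
        Subsingleton (((Tor (ModuleCat.{u} (Localization.AtPrime p)) i).obj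
          (ModuleCat.of (Localization.AtPrime p)
            (IsLocalRing.ResidueField (Localization.AtPrime p)))).obj
          (ModuleCat.of (Localization.AtPrime p) (LocalizedModule p.primeCompl J)))) ∧
      ringDepth (Localization.AtPrime p) ≤
        modWidth (Localization.AtPrime p) (LocalizedModule p.primeCompl J) :=
  tor_vanishing_of_isGorensteinInjective_localized_general R J hJ.isInjectiveCosyzygy p
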